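/- Let M be a TS-module of finite length and degree one and χ a smooth character of T such that dim π_0(M)_{T,χ} ≤ 1 and (M^S)^{T,χ} ≠ 0. Then there is no injective TS-morphism 𝔼[χ] → M. -/

import Mathlib

noncomputable section

open scoped Classical

namespace PSW

/-! ### The affine group `λ.b : x ↦ λ·x + b` over a field `K`. -/

@[ext]
structure Aff (K : Type*) [Field K] where
  t : Kˣ
  s : K

namespace Aff

variable {K : Type*} [Field K]

instance : Mul (Aff K) := ⟨fun g h => ⟨g.t * h.t, g.s + (g.t : K) * h.s⟩⟩
instance : One (Aff K) := ⟨⟨1, 0⟩⟩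
instance : Inv (Aff K) := ⟨fun g => ⟨g.t⁻¹, -(((g.t⁻¹ : Kˣ) : K) * g.s)⟩⟩

@[simp] lemma mul_t (g h : Aff K) : (g * h).t = g.t * h.t := rfl
@[simp] lemma mul_s (g h : Aff K) : (g * h).s = g.s + (g.t : K) * h.s := rfl
@[simp] lemma one_t : (1 : Aff K).t = 1 := rfl
@[simp] lemma one_s : (1 : Aff K).s = 0 := rfl
@[simp] lemma inv_t (g : Aff K) : (g⁻¹).t = g.t⁻¹ := rfl
@[simp] lemma inv_s (g : Aff K) : (g⁻¹).s = -(((g.t⁻¹ : Kˣ) : K) * g.s) := rfl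

instance : Group (Aff K) where
  mul_assoc a b c := by
    ext
    · simp [mul_assoc]
    · simp only [mul_s, mul_t, Units.val_mul]; ring
  one_mul a := by ext <;> simp
  mul_one a := by ext <;> simp
  inv_mul_cancel a := by
    ext
    · simp
    · simp

/-- The element `x_λ` of the group `TS`. -/
def xT (u : Kˣ) : Aff K := ⟨u, 0⟩

/-- The element `s_b` of the group `TS`. -/
def sS (b : K) : Aff K := ⟨1, b⟩

@[simp] lemma xT_t (u : Kˣ) : (xT u : Aff K).t = u := rfl
@[simp] lemma xT_s (u : Kˣ) : (xT u : Aff K).s = 0 := rfl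
@[simp] lemma sS_t (b : K) : (sS b : Aff K).t = 1 := rfl
@[simp] lemma sS_s (b : K) : (sS b : Aff K).s = b := rfl

/-- `T ≅ k^×` as a subgroup of `TS`. -/
def xTHom : Kˣ →* Aff K where
  toFun := xT
  map_one' := rfl
  map_mul' u v := by ext <;> simp [xT]

@[simp] lemma xTHom_apply (u : Kˣ) : (xTHom u : Aff K) = xT u := rfl

lemma mul_sS (g : Aff K) (b : K) : g * sS b = sS ((g.t : K) * b) * g := by
  ext
  · simp
  · simp [add_comm]

lemma sS_mul (b : K) (g : Aff K) : sS b * g = g * sS (((g.t⁻¹ : Kˣ) : K) * b) := by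
  ext
  · simp
  · simp [Units.mul_inv_cancel_left, add_comm]

lemma aff_decomp (g : Aff K) : g = xT g.t * sS (((g.t⁻¹ : Kˣ) : K) * g.s) := by
  ext
  · simp
  · simp [Units.mul_inv_cancel_left]

instance [TopologicalSpace K] : TopologicalSpace (Aff K) :=
  TopologicalSpace.induced (fun g : Aff K => ((g.t, g.s) : Kˣ × K)) inferInstance

end Aff

/-! ### Generalities on representations of a monoid on complex vector spaces. -/

namespace GRep

variable {G : Type*} [Monoid G]

section MonoidModules

variable {V W : Type*} [AddCommMonoid V] [Module ℂ V] [AddCommMonoid W] [Module ℂ W]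

/-- A submodule invariant under the representation. -/
def Invariant (ρ : Representation ℂ G V) (U : Submodule ℂ V) : Prop :=
  ∀ (g : G) (v : V), v ∈ U → ρ g v ∈ U

/-- Equivariance of a linear map with respect to two representations. -/
def Equivariant (ρ : Representation ℂ G V) (σ : Representation ℂ G W) (f : V →ₗ[ℂ] W) : Prop :=
  ∀ (g : G) (v : V), f (ρ g v) = σ g (f v)

/-- Isomorphism of representations. -/
def Iso (ρ : Representation ℂ G V) (σ : Representation ℂ G W) : Prop :=
  ∃ e : V ≃ₗ[ℂ] W, ∀ (g : G) (v : V), e (ρ g v) = σ g (e v)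

/-- Irreducibility. -/
def Irred (ρ : Representation ℂ G V) : Prop :=
  Nontrivial V ∧ ∀ U : Submodule ℂ V, Invariant ρ U → U = ⊥ ∨ U = ⊤

/-- Subrepresentation on an invariant submodule. -/
def sub (ρ : Representation ℂ G V) {U : Submodule ℂ V} (hU : Invariant ρ U) :
    Representation ℂ G ↥U where
  toFun g := (ρ g).restrict fun v hv => hU g v hv
  map_one' := by
    apply LinearMap.ext; intro v; apply Subtype.ext
    simp [LinearMap.restrict_apply]
  map_mul' g h := by
    apply LinearMap.ext; intro v; apply Subtype.ext
    simp [LinearMap.restrict_apply]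

@[simp] lemma sub_apply (ρ : Representation ℂ G V) {U : Submodule ℂ V} (hU : Invariant ρ U)
    (g : G) (v : ↥U) : ((sub ρ hU g v : ↥U) : V) = ρ g (v : V) := rfl

lemma ker_invariant (ρ : Representation ℂ G V) (σ : Representation ℂ G W)
    (f : V →ₗ[ℂ] W) (hf : Equivariant ρ σ f) : Invariant ρ (LinearMap.ker f) := by
  intro g v hv
  rw [LinearMap.mem_ker] at hv ⊢
  rw [hf g v, hv, map_zero]

lemma range_invariant (ρ : Representation ℂ G V) (σ : Representation ℂ G W)
    (f : V →ₗ[ℂ] W) (hf : Equivariant ρ σ f) : Invariant σ (LinearMap.range f) := by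
  rintro g w ⟨v, rfl⟩
  exact ⟨ρ g v, hf g v⟩

lemma map_invariant (ρ : Representation ℂ G V) (σ : Representation ℂ G W)
    (f : V →ₗ[ℂ] W) (hf : Equivariant ρ σ f) (U : Submodule ℂ V) (hU : Invariant ρ U) :
    Invariant σ (U.map f) := by
  rintro g w ⟨v, hv, rfl⟩
  exact ⟨ρ g v, hU g v hv, hf g v⟩

end MonoidModules

section GroupModules

variable {V W : Type*} [AddCommGroup V] [Module ℂ V] [AddCommGroup W] [Module ℂ W]

/-- Quotient representation. -/
def quot (ρ : Representation ℂ G V) (U : Submodule ℂ V) (hU : Invariant ρ U) :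
    Representation ℂ G (V ⧸ U) where
  toFun g := U.mapQ U (ρ g) fun v hv => hU g v hv
  map_one' := by
    apply LinearMap.ext; intro x
    obtain ⟨v, rfl⟩ := Submodule.Quotient.mk_surjective U x
    simp [Submodule.mapQ_apply]
  map_mul' g h := by
    apply LinearMap.ext; intro x
    obtain ⟨v, rfl⟩ := Submodule.Quotient.mk_surjective U x
    simp [Submodule.mapQ_apply]

@[simp] lemma quot_apply (ρ : Representation ℂ G V) (U : Submodule ℂ V) (hU : Invariant ρ U)
    (g : G) (v : V) :
    quot ρ U hU g (Submodule.Quotient.mk v) = Submodule.Quotient.mk (ρ g v) := rfl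

/-- Subquotient representation on `B/A`. -/
def subquot (ρ : Representation ℂ G V) {A B : Submodule ℂ V}
    (hA : Invariant ρ A) (hB : Invariant ρ B) :
    Representation ℂ G (↥B ⧸ A.comap B.subtype) :=
  quot (sub ρ hB) (A.comap B.subtype) fun g v hv => hA g v.1 hv

lemma mkQ_equivariant (ρ : Representation ℂ G V) (U : Submodule ℂ V) (hU : Invariant ρ U) :
    Equivariant ρ (quot ρ U hU) U.mkQ := by
  intro g v
  show Submodule.Quotient.mk (ρ g v) = quot ρ U hU g (Submodule.Quotient.mk v)
  rw [quot_apply]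

end GroupModules

end GRep

/-! ### TS-modules: representations of the affine group. -/

/-- A `TS`-module structure on `V` is a representation of the group `TS ≅ Gl_a(1)`. -/
abbrev Rep (K : Type*) [Field K] (V : Type*) [AddCommGroup V] [Module ℂ V] :=
  Representation ℂ (Aff K) V

section RepDefs

open Aff

variable {K : Type*} [Field K]
variable {V W : Type*} [AddCommGroup V] [Module ℂ V] [AddCommGroup W] [Module ℂ W]

/-- Smoothness: every vector has open stabilizer. -/
def IsSmoothRep [TopologicalSpace K] (ρ : Rep K V) : Prop :=
  ∀ v : V, IsOpen {g : Aff K | ρ g v = v}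

/-- Smoothness of a `T`-module, i.e. of a representation of `T ≅ k^×`. -/
def TIsSmooth {X : Type*} [AddCommMonoid X] [Module ℂ X] [TopologicalSpace K]
    (τ : Representation ℂ Kˣ X) : Prop :=
  ∀ x : X, IsOpen {u : Kˣ | τ u x = x}

/-- Smooth character of `T ≅ k^×` (open kernel, equivalently locally constant). -/
def SmoothMulChar [TopologicalSpace K] (χ : Kˣ →* ℂˣ) : Prop :=
  IsOpen {u : Kˣ | χ u = 1}

/-- The space `V^S` of `S`-invariants. -/
def sInv (ρ : Rep K V) : Submodule ℂ V where
  carrier := {v | ∀ b : K, ρ (sS b) v = v}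
  zero_mem' := fun b => map_zero _
  add_mem' {a b} ha hb := fun c => by rw [map_add, ha c, hb c]
  smul_mem' c v hv := fun b => by rw [map_smul, hv b]

@[simp] lemma mem_sInv (ρ : Rep K V) (v : V) :
    v ∈ sInv ρ ↔ ∀ b : K, ρ (sS b) v = v := Iff.rfl

/-- The `χ`-eigenspace `X^{T,χ}` of a `T`-module. -/
def tEigenT {X : Type*} [AddCommMonoid X] [Module ℂ X]
    (τ : Representation ℂ Kˣ X) (χ : Kˣ →* ℂˣ) : Submodule ℂ X where
  carrier := {x | ∀ u : Kˣ, τ u x = (χ u : ℂ) • x}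
  zero_mem' := fun u => by simp
  add_mem' {a b} ha hb := fun u => by rw [map_add, ha u, hb u, smul_add]
  smul_mem' c x hx := fun u => by rw [map_smul, hx u]; exact smul_comm c ((χ u : ℂ)) x

@[simp] lemma mem_tEigenT {X : Type*} [AddCommMonoid X] [Module ℂ X]
    (τ : Representation ℂ Kˣ X) (χ : Kˣ →* ℂˣ) (x : X) :
    x ∈ tEigenT τ χ ↔ ∀ u : Kˣ, τ u x = (χ u : ℂ) • x := Iff.rfl

/-- The `χ`-eigenspace `V^{T,χ}` of a `TS`-module. -/
def tEigen (ρ : Rep K V) (χ : Kˣ →* ℂˣ) : Submodule ℂ V := tEigenT (ρ.comp xTHom) χ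

/-- The kernel of the projection to the `S`-coinvariants `V_S`. -/
def sCoinvKer (ρ : Rep K V) : Submodule ℂ V :=
  Submodule.span ℂ {w : V | ∃ (b : K) (v : V), w = ρ (sS b) v - v}

/-- The kernel of the projection to the twisted coinvariants `V_{S,ψ'}`. -/
def sTwistKer (ρ : Rep K V) (ψ' : AddChar K ℂ) : Submodule ℂ V :=
  Submodule.span ℂ {w : V | ∃ (b : K) (v : V), w = ρ (sS b) v - ψ' b • v}

/-- The kernel of the projection to the `χ`-coinvariants `X_{T,χ}` of a `T`-module. -/
def tTwistKerT {X : Type*} [AddCommGroup X] [Module ℂ X]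
    (τ : Representation ℂ Kˣ X) (χ : Kˣ →* ℂˣ) : Submodule ℂ X :=
  Submodule.span ℂ {w : X | ∃ (u : Kˣ) (x : X), w = τ u x - (χ u : ℂ) • x}

/-- The kernel of the projection to the `χ`-coinvariants `V_{T,χ}` of a `TS`-module. -/
def tTwistKer (ρ : Rep K V) (χ : Kˣ →* ℂˣ) : Submodule ℂ V := tTwistKerT (ρ.comp xTHom) χ

lemma sCoinvKer_invariant (ρ : Rep K V) : GRep.Invariant ρ (sCoinvKer ρ) := by
  intro g v hv
  have h : sCoinvKer ρ ≤ Submodule.comap (ρ g) (sCoinvKer ρ) := by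
    refine Submodule.span_le.2 ?_
    rintro w ⟨b, v', rfl⟩
    simp only [SetLike.mem_coe, Submodule.mem_comap, map_sub]
    have h1 : ρ g (ρ (sS b) v') = ρ (sS ((g.t : K) * b)) (ρ g v') := by
      rw [← Module.End.mul_apply, ← map_mul, mul_sS, map_mul, Module.End.mul_apply]
    rw [h1]
    exact Submodule.subset_span ⟨(g.t : K) * b, ρ g v', rfl⟩
  exact h hv

lemma sInv_invariant (ρ : Rep K V) : GRep.Invariant ρ (sInv ρ) := by
  intro g v hv
  rw [mem_sInv] at hv ⊢
  intro b
  have h1 : ρ (sS b) (ρ g v) = ρ g (ρ (sS (((g.t⁻¹ : Kˣ) : K) * b)) v) := by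
    rw [← Module.End.mul_apply, ← map_mul, sS_mul, map_mul, Module.End.mul_apply]
  rw [h1, hv _]

/-- The `S`-coinvariants `π₀(V) = V_S` as a `TS`-module (`S` acting trivially). -/
def piZeroRep (ρ : Rep K V) : Rep K (V ⧸ sCoinvKer ρ) :=
  GRep.quot ρ (sCoinvKer ρ) (sCoinvKer_invariant ρ)

/-- The `S`-coinvariants `π₀(V) = V_S` as a `T`-module. -/
def piZeroT (ρ : Rep K V) : Representation ℂ Kˣ (V ⧸ sCoinvKer ρ) :=
  (piZeroRep ρ).comp xTHom

/-- The `T`-module structure on `κ(V) = V^S`. -/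
def sInvT (ρ : Rep K V) : Representation ℂ Kˣ ↥(sInv ρ) :=
  (GRep.sub ρ (sInv_invariant ρ)).comp xTHom

/-- A `TS`-module is perfect if all its eigenspaces `V^{T,χ}` for smooth `χ` vanish. -/
def Perfect [TopologicalSpace K] (ρ : Rep K V) : Prop :=
  ∀ χ : Kˣ →* ℂˣ, SmoothMulChar χ → tEigen ρ χ = ⊥

/-- A finite-dimensional `T`-module is cyclic if each generalized eigenspace is a single
Jordan block; equivalently all eigenspaces `X^{T,χ}` have dimension at most one. -/
def TCyclic {X : Type*} [AddCommGroup X] [Module ℂ X]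
    (τ : Representation ℂ Kˣ X) : Prop :=
  ∀ χ : Kˣ →* ℂˣ, Module.finrank ℂ ↥(tEigenT τ χ) ≤ 1

lemma sCoinvKer_le_comap (ρ : Rep K V) (σ : Rep K W)
    (f : V →ₗ[ℂ] W) (hf : GRep.Equivariant ρ σ f) :
    sCoinvKer ρ ≤ (sCoinvKer σ).comap f := by
  refine Submodule.span_le.2 ?_
  rintro w ⟨b, v, rfl⟩
  simp only [SetLike.mem_coe, Submodule.mem_comap, map_sub]
  rw [hf]
  exact Submodule.subset_span ⟨b, f v, rfl⟩

/-- The map induced by an equivariant map on the `S`-coinvariants `π₀`. -/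
def piZeroMap (ρ : Rep K V) (σ : Rep K W) (f : V →ₗ[ℂ] W) (hf : GRep.Equivariant ρ σ f) :
    (V ⧸ sCoinvKer ρ) →ₗ[ℂ] (W ⧸ sCoinvKer σ) :=
  Submodule.mapQ _ _ f (sCoinvKer_le_comap ρ σ f hf)

lemma piZeroMap_equivariant (ρ : Rep K V) (σ : Rep K W) (f : V →ₗ[ℂ] W)
    (hf : GRep.Equivariant ρ σ f) :
    GRep.Equivariant (piZeroRep ρ) (piZeroRep σ) (piZeroMap ρ σ f hf) := by
  intro g x
  obtain ⟨v, rfl⟩ := Submodule.Quotient.mk_surjective _ x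
  show piZeroMap ρ σ f hf (piZeroRep ρ g (Submodule.Quotient.mk v))
      = piZeroRep σ g (piZeroMap ρ σ f hf (Submodule.Quotient.mk v))
  rw [show piZeroRep ρ g (Submodule.Quotient.mk v) = Submodule.Quotient.mk (ρ g v) from rfl]
  rw [show piZeroMap ρ σ f hf (Submodule.Quotient.mk v) = Submodule.Quotient.mk (f v) from rfl]
  rw [show piZeroMap ρ σ f hf (Submodule.Quotient.mk (ρ g v))
      = Submodule.Quotient.mk (f (ρ g v)) from rfl]
  rw [show piZeroRep σ g (Submodule.Quotient.mk (f v)) = Submodule.Quotient.mk (σ g (f v)) from rfl]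
  rw [hf]

lemma kappaImg_invariant (ρ : Rep K V) :
    GRep.Invariant (piZeroT ρ) ((sInv ρ).map (sCoinvKer ρ).mkQ) := by
  rintro u w ⟨v, hv, rfl⟩
  refine ⟨ρ (xT u) v, sInv_invariant ρ (xT u) v hv, ?_⟩
  rfl

end RepDefs

/-! ### Composition series and degree. -/

/-- A composition series for a `TS`-module, witnessing finite length: a maximal chain of
invariant submodules (the subquotients are then irreducible). -/
structure CompSeries {K : Type*} [Field K] {V : Type*} [AddCommGroup V] [Module ℂ V]
    (ρ : Rep K V) where
  n : ℕ
  W : ℕ → Submodule ℂ V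
  bot : W 0 = ⊥
  top : W n = ⊤
  inv : ∀ i, GRep.Invariant ρ (W i)
  lt : ∀ i < n, W i < W (i + 1)
  maximal : ∀ i < n, ∀ C : Submodule ℂ V, GRep.Invariant ρ C → W i ≤ C → C ≤ W (i + 1) →
    C = W i ∨ C = W (i + 1)

/-- The number of Jordan–Hölder constituents of a composition series isomorphic to a given
representation `σ` (applied with `σ = 𝕊`, this is the degree). -/
def CompSeries.deg {K : Type*} [Field K] {V : Type*} [AddCommGroup V] [Module ℂ V]
    {ρ : Rep K V} (c : CompSeries ρ) {W₀ : Type*} [AddCommMonoid W₀] [Module ℂ W₀]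
    (σ : Representation ℂ (Aff K) W₀) : ℕ :=
  (Finset.univ.filter fun i : Fin c.n =>
    GRep.Iso (GRep.subquot ρ (c.inv i.1) (c.inv (i.1 + 1))) σ).card

/-! ### Fiber products of a `T`-module with a `TS`-module over a `T`-module. -/

section Fiber

open Aff

variable {K : Type*} [Field K]
variable {X Y E : Type*} [AddCommGroup X] [Module ℂ X] [AddCommGroup Y] [Module ℂ Y]
  [AddCommGroup E] [Module ℂ E]

/-- The product `TS`-module `X × E` where `S` acts trivially on the `T`-module `X`. -/
def prodRepTE (τ : Representation ℂ Kˣ X) (ρ : Rep K E) : Rep K (X × E) where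
  toFun g := (τ g.t).prodMap (ρ g)
  map_one' := by
    apply LinearMap.ext; rintro ⟨x, v⟩
    simp
  map_mul' g h := by
    apply LinearMap.ext; rintro ⟨x, v⟩
    simp [map_mul]

/-- The underlying space of the fiber product `𝔼[f] = X ×_Y E`. -/
def fiberKer (f : X →ₗ[ℂ] Y) (q : E →ₗ[ℂ] Y) : Submodule ℂ (X × E) :=
  LinearMap.ker (f.comp (LinearMap.fst ℂ X E) - q.comp (LinearMap.snd ℂ X E))

lemma mem_fiberKer (f : X →ₗ[ℂ] Y) (q : E →ₗ[ℂ] Y) (p : X × E) :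
    p ∈ fiberKer f q ↔ f p.1 = q p.2 := by
  simp [fiberKer, sub_eq_zero]

lemma fiber_invariant (τX : Representation ℂ Kˣ X) (ρE : Rep K E)
    (τY : Representation ℂ Kˣ Y) (f : X →ₗ[ℂ] Y) (q : E →ₗ[ℂ] Y)
    (hf : ∀ (u : Kˣ) (x : X), f (τX u x) = τY u (f x))
    (hq : sCoinvKer ρE ≤ LinearMap.ker q)
    (hqT : ∀ (u : Kˣ) (v : E), q (ρE (xT u) v) = τY u (q v)) :
    GRep.Invariant (prodRepTE τX ρE) (fiberKer f q) := by
  intro g p hp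
  rw [mem_fiberKer] at hp ⊢
  have hsb : q (ρE (sS (((g.t⁻¹ : Kˣ) : K) * g.s)) p.2) = q p.2 := by
    have h1 : ρE (sS (((g.t⁻¹ : Kˣ) : K) * g.s)) p.2 - p.2 ∈ sCoinvKer ρE :=
      Submodule.subset_span ⟨_, _, rfl⟩
    have h2 := hq h1
    rw [LinearMap.mem_ker, map_sub, sub_eq_zero] at h2
    exact h2
  have hdecomp : ρE g p.2 = ρE (xT g.t) (ρE (sS (((g.t⁻¹ : Kˣ) : K) * g.s)) p.2) := by
    conv_lhs => rw [aff_decomp g]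
    rw [map_mul, Module.End.mul_apply]
  have h1 : ((prodRepTE τX ρE) g p).1 = τX g.t p.1 := rfl
  have h2 : ((prodRepTE τX ρE) g p).2 = ρE g p.2 := rfl
  rw [h1, h2, hf, hp, hdecomp, hqT, hsb]

end Fiber

/-! ### Jordan blocks of finite-dimensional `T`-modules. -/

section Jordan

variable {K : Type*} [Field K]
variable {X : Type*} [AddCommGroup X] [Module ℂ X]

/-- A Jordan block of a `T`-module: a nonzero indecomposable invariant direct summand. -/
def IsJordanBlock (τ : Representation ℂ Kˣ X) (J : Submodule ℂ X) : Prop :=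
  J ≠ ⊥ ∧ GRep.Invariant τ J ∧ (∃ C : Submodule ℂ X, GRep.Invariant τ C ∧ IsCompl J C) ∧
    ∀ A B : Submodule ℂ X, GRep.Invariant τ A → GRep.Invariant τ B → A ≤ J → B ≤ J →
      A ⊓ B = ⊥ → A ⊔ B = J → A = ⊥ ∨ B = ⊥

end Jordan

/-! ### Invariants and coinvariants for a normal subgroup of an arbitrary group. -/

section Grp

variable {Γ : Type*} [Group Γ]
variable {V W : Type*} [AddCommGroup V] [Module ℂ V] [AddCommGroup W] [Module ℂ W]

/-- Invariants `V^N` under a subgroup `N`. -/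
def grpInv (ρ : Representation ℂ Γ V) (N : Subgroup Γ) : Submodule ℂ V where
  carrier := {v | ∀ n ∈ N, ρ n v = v}
  zero_mem' := fun n _ => map_zero _
  add_mem' {a b} ha hb := fun n hn => by rw [map_add, ha n hn, hb n hn]
  smul_mem' c v hv := fun n hn => by rw [map_smul, hv n hn]

@[simp] lemma mem_grpInv (ρ : Representation ℂ Γ V) (N : Subgroup Γ) (v : V) :
    v ∈ grpInv ρ N ↔ ∀ n ∈ N, ρ n v = v := Iff.rfl

/-- The kernel of the projection to the coinvariants `V_N` under a subgroup `N`. -/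
def grpCoinvKer (ρ : Representation ℂ Γ V) (N : Subgroup Γ) : Submodule ℂ V :=
  Submodule.span ℂ {w : V | ∃ n ∈ N, ∃ v : V, w = ρ n v - v}

lemma grpInv_invariant (ρ : Representation ℂ Γ V) (N : Subgroup Γ) [hN : N.Normal] :
    GRep.Invariant ρ (grpInv ρ N) := by
  intro γ v hv
  rw [mem_grpInv] at hv ⊢
  intro n hn
  have hmem : γ⁻¹ * n * γ ∈ N := by
    have := hN.conj_mem n hn γ⁻¹
    simpa using this
  have key : ρ n (ρ γ v) = ρ γ (ρ (γ⁻¹ * n * γ) v) := by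
    rw [← Module.End.mul_apply, ← map_mul, ← Module.End.mul_apply, ← map_mul]
    congr 1
    group
  rw [key, hv _ hmem]

lemma grpCoinvKer_invariant (ρ : Representation ℂ Γ V) (N : Subgroup Γ) [hN : N.Normal] :
    GRep.Invariant ρ (grpCoinvKer ρ N) := by
  intro γ v hv
  have h : grpCoinvKer ρ N ≤ Submodule.comap (ρ γ) (grpCoinvKer ρ N) := by
    refine Submodule.span_le.2 ?_
    rintro w ⟨n, hn, v', rfl⟩
    simp only [SetLike.mem_coe, Submodule.mem_comap, map_sub]
    have key : ρ γ (ρ n v') = ρ (γ * n * γ⁻¹) (ρ γ v') := by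
      rw [← Module.End.mul_apply, ← map_mul, ← Module.End.mul_apply, ← map_mul]
      congr 1
      group
    rw [key]
    exact Submodule.subset_span ⟨γ * n * γ⁻¹, hN.conj_mem n hn γ, ρ γ v', rfl⟩
  exact h hv

/-- The map induced on `N`-invariants by an equivariant map. -/
def grpInvRestrict (ρ : Representation ℂ Γ V) (σ : Representation ℂ Γ W) (N : Subgroup Γ)
    (f : V →ₗ[ℂ] W) (hf : GRep.Equivariant ρ σ f) : ↥(grpInv ρ N) →ₗ[ℂ] ↥(grpInv σ N) :=
  f.restrict (fun v hv => by
    rw [mem_grpInv] at hv ⊢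
    intro n hn
    rw [← hf n v, hv n hn])

lemma grpCoinvKer_le_comap (ρ : Representation ℂ Γ V) (σ : Representation ℂ Γ W) (N : Subgroup Γ)
    (f : V →ₗ[ℂ] W) (hf : GRep.Equivariant ρ σ f) :
    grpCoinvKer ρ N ≤ (grpCoinvKer σ N).comap f := by
  refine Submodule.span_le.2 ?_
  rintro w ⟨n, hn, v, rfl⟩
  simp only [SetLike.mem_coe, Submodule.mem_comap, map_sub]
  rw [hf]
  exact Submodule.subset_span ⟨n, hn, f v, rfl⟩

/-- The map induced on `N`-coinvariants by an equivariant map. -/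
def grpCoinvMap (ρ : Representation ℂ Γ V) (σ : Representation ℂ Γ W) (N : Subgroup Γ)
    (f : V →ₗ[ℂ] W) (hf : GRep.Equivariant ρ σ f) :
    (V ⧸ grpCoinvKer ρ N) →ₗ[ℂ] (W ⧸ grpCoinvKer σ N) :=
  Submodule.mapQ _ _ f (grpCoinvKer_le_comap ρ σ N f hf)

end Grp

/-! ### Tate L-factors of finite-dimensional `T`-modules. -/

section Lfactor

variable {K : Type*} [NontriviallyNormedField K]
variable {X : Type*} [AddCommGroup X] [Module ℂ X]

/-- The part of a `T`-module where the `χ`-twisted action is unramified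
(trivial on the norm-one units). -/
def unrPart (τ : Representation ℂ Kˣ X) (χ : Kˣ →* ℂˣ) : Submodule ℂ X where
  carrier := {x | ∀ u : Kˣ, ‖(u : K)‖ = 1 → (χ u : ℂ) • τ u x = x}
  zero_mem' := fun u _ => by simp
  add_mem' {a b} ha hb := fun u hu => by rw [map_add, smul_add, ha u hu, hb u hu]
  smul_mem' c x hx := fun u hu => by
    rw [map_smul, smul_comm, hx u hu]

lemma unrPart_stable (τ : Representation ℂ Kˣ X) (χ : Kˣ →* ℂˣ) (ϖ : Kˣ) :
    ∀ x ∈ unrPart τ χ, ((χ ϖ : ℂ) • τ ϖ) x ∈ unrPart τ χ := by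
  intro x hx u hu
  have comm : τ u (τ ϖ x) = τ ϖ (τ u x) := by
    rw [← Module.End.mul_apply, ← map_mul, mul_comm, map_mul, Module.End.mul_apply]
  calc (χ u : ℂ) • τ u (((χ ϖ : ℂ) • τ ϖ) x)
      = (χ ϖ : ℂ) • ((χ u : ℂ) • τ u (τ ϖ x)) := by
        rw [LinearMap.smul_apply, map_smul, smul_comm]
    _ = (χ ϖ : ℂ) • τ ϖ ((χ u : ℂ) • τ u x) := by rw [comm, map_smul]
    _ = ((χ ϖ : ℂ) • τ ϖ) x := by rw [hx u hu, LinearMap.smul_apply]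

/-- The twisted uniformizer action on the unramified part. -/
def twistOp (τ : Representation ℂ Kˣ X) (χ : Kˣ →* ℂˣ) (ϖ : Kˣ) :
    ↥(unrPart τ χ) →ₗ[ℂ] ↥(unrPart τ χ) :=
  LinearMap.restrict ((χ ϖ : ℂ) • τ ϖ) (unrPart_stable τ χ ϖ)

/-- The Tate `L`-factor `L(s, χ ⊗ X) = det(1 - q^{-s}·(χ·τ)(ϖ) | X^{unr,χ})⁻¹` of a
(finite-dimensional) `T`-module `X`, relative to a uniformizer `ϖ`. -/
def Lfactor (τ : Representation ℂ Kˣ X) (χ : Kˣ →* ℂˣ) (ϖ : Kˣ) (s : ℂ) : ℂ :=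
  (LinearMap.det (LinearMap.id - (‖(ϖ : K)‖ : ℂ) ^ s • twistOp τ χ ϖ))⁻¹

end Lfactor

/-! ### The concrete `TS`-modules `𝕊`, `C_c^∞(k)`, `C_b^∞(k^×)` and `𝔼[χ]`. -/

section Concrete

open Aff

variable (K : Type*) [NontriviallyNormedField K]

/-- The representation of `TS` on functions on `k^×`:
`(s_b g)(x) = ψ(bx) g(x)`, `(x_λ g)(x) = g(xλ)`. -/
def repCx (ψ : AddChar K ℂ) : Rep K (Kˣ → ℂ) where
  toFun g :=
    { toFun := fun f x => ψ (g.s * (x : K)) * f (x * g.t)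
      map_add' := fun f₁ f₂ => by funext x; simp [mul_add]
      map_smul' := fun c f => by
        funext x
        simp only [Pi.smul_apply, smul_eq_mul, RingHom.id_apply]
        ring }
  map_one' := by
    apply LinearMap.ext; intro f; funext x
    simp
  map_mul' g h := by
    apply LinearMap.ext; intro f; funext x
    show ψ ((g.s + (g.t : K) * h.s) * (x : K)) * f (x * (g.t * h.t))
        = ψ (g.s * (x : K)) * (ψ (h.s * ((x * g.t : Kˣ) : K)) * f (x * g.t * h.t))
    have harg : (g.s + (g.t : K) * h.s) * (x : K)
        = g.s * (x : K) + h.s * ((x * g.t : Kˣ) : K) := by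
      push_cast
      ring
    rw [harg, AddChar.map_add_eq_mul, ← mul_assoc x g.t h.t]
    ring

@[simp] lemma repCx_apply (ψ : AddChar K ℂ) (g : Aff K) (f : Kˣ → ℂ) (x : Kˣ) :
    repCx K ψ g f x = ψ (g.s * (x : K)) * f (x * g.t) := rfl

/-- The `χ`-twisted representation of `TS` on functions on `k`:
`(s_b g)(x) = ψ(bx) g(x)`, `(x_λ g)(x) = χ(λ) g(xλ)`.  (Take `χ = 1` for the
untwisted action on `C_c^∞(k)`; the module `𝔼[χ]` is `C_c^∞(k)` with the twisted action.) -/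
def repCc (ψ : AddChar K ℂ) (χ : Kˣ →* ℂˣ) : Rep K (K → ℂ) where
  toFun g :=
    { toFun := fun f x => (χ g.t : ℂ) * ψ (g.s * x) * f (x * (g.t : K))
      map_add' := fun f₁ f₂ => by funext x; simp [mul_add]
      map_smul' := fun c f => by
        funext x
        simp only [Pi.smul_apply, smul_eq_mul, RingHom.id_apply]
        ring }
  map_one' := by
    apply LinearMap.ext; intro f; funext x
    simp
  map_mul' g h := by
    apply LinearMap.ext; intro f; funext x
    show (χ (g.t * h.t) : ℂ) * ψ ((g.s + (g.t : K) * h.s) * x) * f (x * ((g.t * h.t : Kˣ) : K))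
        = (χ g.t : ℂ) * ψ (g.s * x) * ((χ h.t : ℂ) * ψ (h.s * (x * (g.t : K)))
            * f (x * (g.t : K) * (h.t : K)))
    have harg : (g.s + (g.t : K) * h.s) * x = g.s * x + h.s * (x * (g.t : K)) := by ring
    have harg2 : x * ((g.t * h.t : Kˣ) : K) = x * (g.t : K) * (h.t : K) := by
      push_cast
      ring
    rw [harg, harg2, AddChar.map_add_eq_mul, map_mul]
    push_cast
    ring

@[simp] lemma repCc_apply (ψ : AddChar K ℂ) (χ : Kˣ →* ℂˣ) (g : Aff K) (f : K → ℂ) (x : K) :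
    repCc K ψ χ g f x = (χ g.t : ℂ) * ψ (g.s * x) * f (x * (g.t : K)) := rfl

/-- The one-dimensional `TS`-module `ℂ_χ` on which `S` acts trivially and `x_λ` by `χ(λ)`. -/
def chiRep (χ : Kˣ →* ℂˣ) : Rep K ℂ where
  toFun g := (χ g.t : ℂ) • LinearMap.id
  map_one' := by
    apply LinearMap.ext; intro c
    simp
  map_mul' g h := by
    apply LinearMap.ext; intro c
    simp only [mul_t, map_mul, LinearMap.smul_apply, LinearMap.id_apply, Module.End.mul_apply,
      Units.val_mul, smul_eq_mul]
    ring

/-- `C_c^∞(k)`: locally constant, compactly supported functions on `k`. -/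
def CcK : Submodule ℂ (K → ℂ) where
  carrier := {f | IsLocallyConstant f ∧ HasCompactSupport f}
  zero_mem' := ⟨IsLocallyConstant.const 0, by
    rw [hasCompactSupport_def]
    simp⟩
  add_mem' {a b} ha hb := ⟨ha.1.comp₂ hb.1 (· + ·), ha.2.add hb.2⟩
  smul_mem' c f hf := by
    refine ⟨?_, hf.2.mono (Function.support_const_smul_subset c f)⟩
    exact hf.1.comp (fun z => c * z)

@[simp] lemma mem_CcK (f : K → ℂ) :
    f ∈ CcK K ↔ IsLocallyConstant f ∧ HasCompactSupport f := Iff.rfl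

/-- `𝕊 = C_c^∞(k^×)`: locally constant, compactly supported functions on `k^×`. -/
def SSx : Submodule ℂ (Kˣ → ℂ) where
  carrier := {f | IsLocallyConstant f ∧ HasCompactSupport f}
  zero_mem' := ⟨IsLocallyConstant.const 0, by
    rw [hasCompactSupport_def]
    simp⟩
  add_mem' {a b} ha hb := ⟨ha.1.comp₂ hb.1 (· + ·), ha.2.add hb.2⟩
  smul_mem' c f hf := by
    refine ⟨?_, hf.2.mono (Function.support_const_smul_subset c f)⟩
    exact hf.1.comp (fun z => c * z)

@[simp] lemma mem_SSx (f : Kˣ → ℂ) :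
    f ∈ SSx K ↔ IsLocallyConstant f ∧ HasCompactSupport f := Iff.rfl

/-- `C_b^∞(k^×)`: locally constant functions on `k^×` whose support has compact closure
in `k`. -/
def Cb : Submodule ℂ (Kˣ → ℂ) where
  carrier := {f | IsLocallyConstant f ∧
    IsCompact (closure (((↑) : Kˣ → K) '' Function.support f))}
  zero_mem' := ⟨IsLocallyConstant.const 0, by simp⟩
  add_mem' {a b} ha hb := by
    refine ⟨ha.1.comp₂ hb.1 (· + ·), ?_⟩
    refine IsCompact.of_isClosed_subset (ha.2.union hb.2) isClosed_closure ?_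
    refine closure_minimal ?_ (ha.2.isClosed.union hb.2.isClosed)
    refine (Set.image_mono (Function.support_add _ _)).trans ?_
    rw [Set.image_union]
    exact Set.union_subset_union subset_closure subset_closure
  smul_mem' c f hf := by
    refine ⟨hf.1.comp (fun z => c * z), ?_⟩
    refine IsCompact.of_isClosed_subset hf.2 isClosed_closure ?_
    refine closure_mono ?_
    exact Set.image_mono (Function.support_const_smul_subset c f)

@[simp] lemma mem_Cb (f : Kˣ → ℂ) :
    f ∈ Cb K ↔ IsLocallyConstant f ∧
      IsCompact (closure (((↑) : Kˣ → K) '' Function.support f)) := Iff.rfl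

variable {K}

lemma SSx_invariant (ψ : AddChar K ℂ) (hψlc : IsLocallyConstant (⇑ψ)) :
    GRep.Invariant (repCx K ψ) (SSx K) := by
  rintro g f hf
  rw [mem_SSx] at hf ⊢
  obtain ⟨hlc, hcs⟩ := hf
  have heq : repCx K ψ g f
      = (fun x : Kˣ => ψ (g.s * (x : K))) * (f ∘ (Homeomorph.mulRight g.t)) := rfl
  constructor
  · rw [heq]
    refine IsLocallyConstant.mul ?_ ?_
    · exact hψlc.comp_continuous (continuous_const.mul Units.continuous_val)
    · exact hlc.comp_continuous (Homeomorph.mulRight g.t).continuous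
  · rw [heq]
    exact (hcs.comp_homeomorph (Homeomorph.mulRight g.t)).mul_left

lemma CcK_invariant (ψ : AddChar K ℂ) (hψlc : IsLocallyConstant (⇑ψ)) (χ : Kˣ →* ℂˣ) :
    GRep.Invariant (repCc K ψ χ) (CcK K) := by
  rintro g f hf
  rw [mem_CcK] at hf ⊢
  obtain ⟨hlc, hcs⟩ := hf
  have hne : ((g.t : Kˣ) : K) ≠ 0 := g.t.ne_zero
  have heq : repCc K ψ χ g f
      = (fun x : K => (χ g.t : ℂ) * ψ (g.s * x)) * (f ∘ (Homeomorph.mulRight₀ (g.t : K) hne)) :=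
    rfl
  constructor
  · rw [heq]
    refine IsLocallyConstant.mul ?_ ?_
    · exact ((hψlc.comp_continuous (continuous_const.mul continuous_id)).comp
        (fun z => (χ g.t : ℂ) * z))
    · exact hlc.comp_continuous (Homeomorph.mulRight₀ (g.t : K) hne).continuous
  · rw [heq]
    exact (hcs.comp_homeomorph (Homeomorph.mulRight₀ (g.t : K) hne)).mul_left

/-- The `TS`-module `𝕊 = C_c^∞(k^×)`. -/
def SRep (ψ : AddChar K ℂ) (hψlc : IsLocallyConstant (⇑ψ)) : Rep K ↥(SSx K) :=
  GRep.sub (repCx K ψ) (SSx_invariant ψ hψlc)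

/-- The `TS`-module `𝔼[χ]`, i.e. `C_c^∞(k)` with the `χ`-twisted action. -/
def ERep (ψ : AddChar K ℂ) (hψlc : IsLocallyConstant (⇑ψ)) (χ : Kˣ →* ℂˣ) : Rep K ↥(CcK K) :=
  GRep.sub (repCc K ψ χ) (CcK_invariant ψ hψlc χ)

/-- The `TS`-module `𝕊^s`, a direct sum of `s` copies of `𝕊`. -/
def SRepPow (ψ : AddChar K ℂ) (hψlc : IsLocallyConstant (⇑ψ)) (s : ℕ) :
    Rep K (Fin s → ↥(SSx K)) where
  toFun g := LinearMap.pi fun i => (SRep ψ hψlc g).comp (LinearMap.proj i)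
  map_one' := by
    apply LinearMap.ext; intro v; funext i
    simp
  map_mul' g h := by
    apply LinearMap.ext; intro v; funext i
    simp [map_mul]

/-- The submodule `E` of `C_b^∞(k^×)` consisting of functions which are `χ`-eigenvectors
modulo `𝕊`; the quotient `E/𝕊` is the `χ`-eigenspace of `C_b^∞(k^×)/𝕊`. -/
def quotEigen (ψ : AddChar K ℂ) (χ : Kˣ →* ℂˣ) : Submodule ℂ (Kˣ → ℂ) where
  carrier := {f | f ∈ Cb K ∧ ∀ u : Kˣ, repCx K ψ (Aff.xT u) f - (χ u : ℂ) • f ∈ SSx K}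
  zero_mem' := ⟨(Cb K).zero_mem, fun u => by simpa using (SSx K).zero_mem⟩
  add_mem' {a b} ha hb := by
    refine ⟨(Cb K).add_mem ha.1 hb.1, fun u => ?_⟩
    rw [map_add, smul_add, add_sub_add_comm]
    exact (SSx K).add_mem (ha.2 u) (hb.2 u)
  smul_mem' c f hf := by
    refine ⟨(Cb K).smul_mem c hf.1, fun u => ?_⟩
    rw [map_smul, smul_comm, ← smul_sub]
    exact (SSx K).smul_mem c (hf.2 u)

/-- Evaluation at `0 ∈ k`, realizing the quotient map `𝔼[χ] → ℂ_χ` with kernel `𝕊`. -/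
def ev0 : ↥(CcK K) →ₗ[ℂ] ℂ where
  toFun f := (f : K → ℂ) 0
  map_add' f g := rfl
  map_smul' c f := rfl

end Concrete

/-! ### The diagonal torus in GL(2). -/

section GL2

variable {K : Type*} [Field K]

/-- The diagonal element `diag(a, b)` of `GL(2, K)`. -/
def diagGL (a b : Kˣ) : Matrix.GeneralLinearGroup (Fin 2) K where
  val := Matrix.diagonal ![(a : K), (b : K)]
  inv := Matrix.diagonal ![((a : K))⁻¹, ((b : K))⁻¹]
  val_inv := by
    ext i j
    fin_cases i <;> fin_cases j <;>
      simp [Matrix.mul_apply, Fin.sum_univ_two, Matrix.diagonal, Matrix.one_apply,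
        a.ne_zero, b.ne_zero]
  inv_val := by
    ext i j
    fin_cases i <;> fin_cases j <;>
      simp [Matrix.mul_apply, Fin.sum_univ_two, Matrix.diagonal, Matrix.one_apply,
        a.ne_zero, b.ne_zero]

end GL2

section Helpers

open Aff Topology

section FieldFacts

variable {K : Type*} [NontriviallyNormedField K] [IsUltrametricDist K] [ProperSpace K]

lemma hp_annulus_compact (R : ℝ) : IsCompact {u : Kˣ | 1 ≤ ‖(u : K)‖ ∧ ‖(u : K)‖ ≤ R} := by
  have hc : IsCompact ((Metric.closedBall (0 : K) R) ×ˢ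
      (MulOpposite.unop ⁻¹' (Metric.closedBall (0 : K) 1))) := by
    refine (isCompact_closedBall _ _).prod ?_
    exact (MulOpposite.opHomeomorph.symm.isCompact_preimage).2 (isCompact_closedBall _ _)
  have := (Units.isClosedEmbedding_embedProduct (α := K)).isCompact_preimage hc
  refine this.of_isClosed_subset ?_ ?_
  · exact (isClosed_le continuous_const (continuous_norm.comp Units.continuous_val)).inter
      (isClosed_le (continuous_norm.comp Units.continuous_val) continuous_const)
  · rintro u ⟨h1, h2⟩
    simp only [Set.mem_preimage, Set.mem_prod, Units.embedProduct_apply, Metric.mem_closedBall,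
      dist_zero_right, MulOpposite.unop_op, Units.val_inv_eq_inv_val, norm_inv]
    exact ⟨h2, inv_le_one_of_one_le₀ h1⟩

lemma hp_H_compact : IsCompact {u : Kˣ | ‖(u : K)‖ = 1} := by
  have : {u : Kˣ | ‖(u : K)‖ = 1} = {u : Kˣ | 1 ≤ ‖(u : K)‖ ∧ ‖(u : K)‖ ≤ 1} := by
    ext u; simp only [Set.mem_ofPred_eq]; rw [and_comm, le_antisymm_iff]
  rw [this]; exact hp_annulus_compact 1

lemma hp_norm_lc : IsLocallyConstant (fun u : Kˣ => ‖(u : K)‖) := by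
  rw [IsLocallyConstant.iff_eventually_eq]
  intro x
  have hx : 0 < ‖(x : K)‖ := norm_pos_iff.2 x.ne_zero
  have : ∀ᶠ y : Kˣ in 𝓝 x, dist (y : K) (x : K) < ‖(x : K)‖ :=
    (Units.continuous_val.tendsto x).eventually (Metric.ball_mem_nhds _ hx)
  filter_upwards [this] with y hy
  rw [dist_eq_norm] at hy
  have h := IsUltrametricDist.norm_add_eq_max_of_norm_ne_norm (x := (y : K) - x) (y := (x : K)) hy.ne
  rw [sub_add_cancel, max_eq_right hy.le] at h
  exact h

lemma hp_unif : ∃ ϖ : Kˣ, ∀ u : Kˣ, ∃ k : ℤ, ‖((u * ϖ ^ k : Kˣ) : K)‖ = 1 := by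
  obtain ⟨a, ha⟩ := NormedField.exists_one_lt_norm K
  have ha0 : a ≠ 0 := by rintro rfl; simp at ha; linarith
  set A : Set Kˣ := {u : Kˣ | 1 ≤ ‖(u : K)‖ ∧ ‖(u : K)‖ ≤ ‖a‖}
  have hfin : ((fun u : Kˣ => ‖(u : K)‖) '' A).Finite := by
    let _ : TopologicalSpace ℝ := ⊥
    have _ : DiscreteTopology ℝ := ⟨rfl⟩
    exact ((hp_annulus_compact ‖a‖).image (hp_norm_lc (K := K)).continuous).finite_of_discrete
  have hfin2 : ((fun u : Kˣ => ‖(u : K)‖) '' (A ∩ {u | 1 < ‖(u : K)‖})).Finite :=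
    hfin.subset (Set.image_mono Set.inter_subset_left)
  have hne : (A ∩ {u | 1 < ‖(u : K)‖}).Nonempty :=
    ⟨Units.mk0 a ha0, ⟨ha.le, le_rfl⟩, ha⟩
  obtain ⟨r, ⟨ϖ, hϖ, rfl⟩, hmin⟩ := Set.exists_min_image _ id hfin2 (hne.image _)
  refine ⟨ϖ, fun u => ?_⟩
  obtain ⟨k, hk1, hk2⟩ := exists_mem_Ico_zpow (norm_pos_iff.2 u.ne_zero) hϖ.2
  have hp : 0 < ‖(ϖ : K)‖ := norm_pos_iff.2 ϖ.ne_zero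
  refine ⟨-k, ?_⟩
  have hn : ‖((u * ϖ ^ (-k) : Kˣ) : K)‖ = ‖(u : K)‖ / ‖(ϖ : K)‖ ^ k := by
    simp [norm_mul, norm_zpow, div_eq_mul_inv]
  have h1 : 1 ≤ ‖((u * ϖ ^ (-k) : Kˣ) : K)‖ := by
    rw [hn, le_div_iff₀ (zpow_pos hp k), one_mul]; exact hk1
  have h2 : ‖((u * ϖ ^ (-k) : Kˣ) : K)‖ < ‖(ϖ : K)‖ := by
    rw [hn, div_lt_iff₀ (zpow_pos hp k), mul_comm, ← zpow_add_one₀ hp.ne']; exact hk2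
  by_contra hne1
  have h3 : 1 < ‖((u * ϖ ^ (-k) : Kˣ) : K)‖ := lt_of_le_of_ne h1 (Ne.symm hne1)
  exact absurd (hmin _ ⟨_, ⟨⟨h1, h2.le.trans hϖ.1.2⟩, h3⟩, rfl⟩) (not_le.2 h2)

/-- Some positive multiple of `b` lies in any given neighbourhood of zero. -/
lemma hp_mult (b : K) (O : Set K) (hO : O ∈ 𝓝 (0 : K)) : ∃ n : ℕ, 0 < n ∧ (n : K) * b ∈ O := by
  have hb : ∀ n : ℕ, (n : K) * b ∈ Metric.closedBall (0 : K) ‖b‖ := by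
    intro n
    rw [mem_closedBall_zero_iff, norm_mul]
    exact mul_le_of_le_one_left (norm_nonneg _) (IsUltrametricDist.norm_natCast_le_one K n)
  obtain ⟨x, -, φ, hφ, hlim⟩ := (isCompact_closedBall (0 : K) ‖b‖).tendsto_subseq hb
  have h := (hlim.comp (Filter.tendsto_add_atTop_nat 1)).sub hlim
  rw [sub_self] at h
  obtain ⟨j, hj⟩ := (h.eventually hO).exists
  refine ⟨φ (j + 1) - φ j, Nat.sub_pos_of_lt (hφ (Nat.lt_succ_self j)), ?_⟩
  rw [Nat.cast_sub (hφ (Nat.lt_succ_self j)).le, sub_mul]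
  exact hj

end FieldFacts

section LinAlg

open Polynomial

lemma hp_step {X : Type*} [AddCommGroup X] [Module ℂ X] (t ti : Module.End ℂ X)
    (h1 : ∀ x, ti (t x) = x) (h2 : ∀ x, t (ti x) = x) (C D : Submodule ℂ X)
    (hC : ∀ x ∈ C, t x ∈ C) (hCi : ∀ x ∈ C, ti x ∈ C)
    (hD : ∀ x ∈ D, t x ∈ D) (hDi : ∀ x ∈ D, ti x ∈ D) (hCD : C ≤ D)
    (hmax : ∀ E : Submodule ℂ X, (∀ x ∈ E, t x ∈ E) → (∀ x ∈ E, ti x ∈ E) → C ≤ E → E ≤ D →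
      E = C ∨ E = D)
    (hfg : C.FG) : D.FG := by
  by_cases hle : D ≤ C
  · rwa [le_antisymm hle hCD]
  obtain ⟨v, hvD, hvC⟩ := SetLike.not_le_iff_exists.1 hle
  have haev : ∀ (E : Submodule ℂ X), (∀ x ∈ E, t x ∈ E) → ∀ (p : ℂ[X]), ∀ x ∈ E,
      aeval t p x ∈ E := by
    intro E hE p
    induction p using Polynomial.induction_on' with
    | add p q hp hq => intro x hx; simpa using E.add_mem (hp x hx) (hq x hx)
    | monomial n a =>
      intro x hx
      rw [aeval_monomial, Module.End.mul_apply, Module.algebraMap_end_apply]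
      refine E.smul_mem _ ?_
      induction n with
      | zero => simpa
      | succ k ih => rw [pow_succ', Module.End.mul_apply]; exact hE _ ih
  by_cases hq : ∃ q : ℂ[X], q ≠ 0 ∧ aeval t q v ∈ C
  · obtain ⟨q, hq0, hqC⟩ := hq
    let L : ℂ[X] →ₗ[ℂ] X := (LinearMap.applyₗ v).comp (aeval t).toLinearMap
    have hL : ∀ p, L p = aeval t p v := fun p => rfl
    let E : Submodule ℂ X := C ⊔ (Polynomial.degreeLT ℂ q.natDegree).map L
    have hEfg : E.FG := by
      refine hfg.sup (Submodule.FG.map _ ?_)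
      rw [← Module.Finite.iff_fg]
      exact Module.Finite.equiv (Polynomial.degreeLTEquiv ℂ q.natDegree).symm
    have hall : ∀ p : ℂ[X], aeval t p v ∈ E := by
      intro p
      rw [← EuclideanDomain.mod_add_div p q, map_add, LinearMap.add_apply]
      refine E.add_mem ?_ ?_
      · refine (le_sup_right : _ ≤ E) ⟨p % q, ?_, rfl⟩
        rw [SetLike.mem_coe, Polynomial.mem_degreeLT, ← Polynomial.degree_eq_natDegree hq0]
        exact EuclideanDomain.mod_lt p hq0
      · refine (le_sup_left : _ ≤ E) ?_
        rw [mul_comm, map_mul, Module.End.mul_apply]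
        exact haev C hC _ _ hqC
    have hEt : ∀ x ∈ E, t x ∈ E := by
      intro x hx
      obtain ⟨y, hy, z, ⟨p, -, rfl⟩, rfl⟩ := Submodule.mem_sup.1 hx
      rw [map_add]
      refine E.add_mem ((le_sup_left : _ ≤ E) (hC y hy)) ?_
      have := hall (Polynomial.X * p)
      rw [map_mul, aeval_X, Module.End.mul_apply] at this
      exact this
    have hEti : ∀ x ∈ E, ti x ∈ E := by
      intro x hx
      haveI : Module.Finite ℂ E := Module.Finite.iff_fg.2 hEfg
      have hinj : Function.Injective (t.restrict hEt) := by
        intro a b hab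
        have hh : t a = t b := congrArg Subtype.val hab
        apply Subtype.ext
        rw [← h1 a, hh, h1]
      obtain ⟨y, hy⟩ := (LinearMap.injective_iff_surjective.1 hinj) ⟨x, hx⟩
      have hh : t y = x := congrArg Subtype.val hy
      rw [← hh, h1]; exact y.2
    have hED : E ≤ D := by
      refine sup_le hCD ?_
      rintro _ ⟨p, -, rfl⟩
      exact haev D hD p v hvD
    rcases hmax E hEt hEti le_sup_left hED with h | h
    · exfalso; apply hvC; rw [← h]; simpa using hall 1
    · rwa [← h]
  · exfalso
    push Not at hq
    let E : Submodule ℂ X :=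
      { carrier := {w | w ∈ D ∧ ∃ (m : ℕ) (p : ℂ[X]),
          aeval t (Polynomial.X ^ m : ℂ[X]) w - aeval t ((Polynomial.X - 1) * p) v ∈ C}
        zero_mem' := ⟨D.zero_mem, 0, 0, by simp⟩
        add_mem' := by
          rintro a b ⟨ha, m, p, hp⟩ ⟨hb, n, q, hq⟩
          refine ⟨D.add_mem ha hb, m + n, Polynomial.X ^ n * p + Polynomial.X ^ m * q, ?_⟩
          have := C.add_mem (haev C hC (Polynomial.X ^ n) _ hp)
            (haev C hC (Polynomial.X ^ m) _ hq)
          rw [map_sub, map_sub, ← Module.End.mul_apply, ← Module.End.mul_apply,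
            ← Module.End.mul_apply, ← Module.End.mul_apply, ← map_mul, ← map_mul, ← map_mul,
            ← map_mul] at this
          convert this using 1
          rw [map_add, show (Polynomial.X - 1) * (Polynomial.X ^ n * p + Polynomial.X ^ m * q)
            = Polynomial.X ^ n * ((Polynomial.X - 1) * p)
              + Polynomial.X ^ m * ((Polynomial.X - 1) * q) by ring, map_add (aeval t),
            LinearMap.add_apply, show (Polynomial.X : ℂ[X]) ^ n * Polynomial.X ^ m
              = Polynomial.X ^ (m + n) by ring, ← pow_add]
          abel
        smul_mem' := by
          rintro c a ⟨ha, m, p, hp⟩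
          refine ⟨D.smul_mem c ha, m, c • p, ?_⟩
          have := C.smul_mem c hp
          rw [smul_sub] at this
          convert this using 1
          rw [map_smul, mul_smul_comm, map_smul, LinearMap.smul_apply] }
    have hEt : ∀ x ∈ E, t x ∈ E := by
      rintro x ⟨hx, m, p, hp⟩
      refine ⟨hD x hx, m, Polynomial.X * p, ?_⟩
      have := hC _ hp
      convert this using 1
      rw [map_sub, show (Polynomial.X - 1) * (Polynomial.X * p)
        = Polynomial.X * ((Polynomial.X - 1) * p) by ring, map_mul _ Polynomial.X, aeval_X,
        Module.End.mul_apply]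
      congr 1
      rw [map_pow, aeval_X, ← Module.End.mul_apply, ← Module.End.mul_apply, ← pow_succ, ← pow_succ']
    have hEti : ∀ x ∈ E, ti x ∈ E := by
      rintro x ⟨hx, m, p, hp⟩
      refine ⟨hDi x hx, m + 1, p, ?_⟩
      rwa [pow_succ, map_mul, Module.End.mul_apply, aeval_X, h2]
    have hCE : C ≤ E := fun x hx => ⟨hCD hx, 0, 0, by simpa⟩
    rcases hmax E hEt hEti hCE (fun x hx => hx.1) with h | h
    · apply hq (Polynomial.X - 1) (Polynomial.X_sub_C_ne_zero (1 : ℂ))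
      rw [← h]
      exact ⟨haev D hD _ v hvD, 0, 1, by simp⟩
    · have hvE : v ∈ E := by rw [h]; exact hvD
      obtain ⟨-, m, p, hp⟩ := hvE
      refine hq (Polynomial.X ^ m - (Polynomial.X - 1) * p) ?_ (by simpa using hp)
      intro h0
      have := congrArg (Polynomial.eval 1) h0
      simp at this

end LinAlg

section TMod

variable {K : Type*} [NontriviallyNormedField K] [IsUltrametricDist K] [ProperSpace K]

lemma hp_comm {G X : Type*} [CommGroup G] [AddCommGroup X] [Module ℂ X]
    (σ : Representation ℂ G X) (u v : G) (x : X) : σ u (σ v x) = σ v (σ u x) := by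
  rw [← Module.End.mul_apply, ← map_mul, mul_comm, map_mul, Module.End.mul_apply]

lemma hp_Tlemma {X : Type*} [AddCommGroup X] [Module ℂ X] (σ : Representation ℂ Kˣ X)
    (hsm : ∀ x : X, {u : Kˣ | σ u x = x} ∈ 𝓝 (1 : Kˣ))
    (n : ℕ) (W : ℕ → Submodule ℂ X) (hbot : W 0 = ⊥) (htop : W n = ⊤)
    (hinv : ∀ i, GRep.Invariant σ (W i)) (hle : ∀ i < n, W i ≤ W (i + 1))
    (hmax : ∀ i < n, ∀ C : Submodule ℂ X, GRep.Invariant σ C → W i ≤ C → C ≤ W (i + 1) →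
      C = W i ∨ C = W (i + 1))
    (x₁ x₂ : X) (hx₁ : ∀ u, σ u x₁ = x₁) (hx₂ : ∀ u, σ u x₂ = x₂)
    (hli : LinearIndependent ℂ ![x₁, x₂])
    (N : Submodule ℂ X) (hN : N = Submodule.span ℂ {w : X | ∃ (u : Kˣ) (x : X), w = σ u x - x}) :
    2 ≤ Module.finrank ℂ (X ⧸ N) := by
  -- common stabilizer
  have hstab : ∀ i ≤ n, {u : Kˣ | ∀ x ∈ W i, σ u x = x} ∈ 𝓝 (1 : Kˣ) := by
    intro i
    induction i with
    | zero =>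
      intro _
      rw [hbot]
      refine Filter.univ_mem' fun u x hx => ?_
      rw [(Submodule.mem_bot ℂ).1 hx, map_zero]
    | succ i ih =>
      intro hi
      have hi' : i < n := hi
      by_cases hlt : W (i + 1) ≤ W i
      · filter_upwards [ih hi'.le] with u hu x hx using hu x (hlt hx)
      obtain ⟨v, hv, hvn⟩ := SetLike.not_le_iff_exists.1 hlt
      filter_upwards [ih hi'.le, hsm v] with u hu huv
      let E : Submodule ℂ X := W (i + 1) ⊓ LinearMap.eqLocus (σ u) LinearMap.id
      have hE : GRep.Invariant σ E := by
        intro g x hx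
        refine ⟨hinv _ g x hx.1, ?_⟩
        have h2 : σ u x = x := hx.2
        show σ u (σ g x) = σ g x
        rw [hp_comm, h2]
      rcases hmax i hi' E hE (fun x hx => ⟨hle i hi' hx, hu x hx⟩) inf_le_left with h | h
      · exact absurd (h ▸ (⟨hv, huv⟩ : v ∈ E)) hvn
      · intro x hx
        rw [← h] at hx
        exact hx.2
  have hst : ∀ᶠ u in 𝓝 (1 : Kˣ), σ u = 1 := by
    filter_upwards [hstab n le_rfl] with u hu
    ext x
    exact hu x (by rw [htop]; trivial)
  have hlc : IsLocallyConstant (fun u : Kˣ => σ u) := by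
    rw [IsLocallyConstant.iff_eventually_eq]
    intro x
    have ht : Filter.Tendsto (fun y : Kˣ => y * x⁻¹) (𝓝 x) (𝓝 1) := by
      have : Continuous (fun y : Kˣ => y * x⁻¹) := continuous_id.mul continuous_const
      simpa using this.tendsto x
    filter_upwards [ht.eventually hst] with y hy
    have : y = (y * x⁻¹) * x := by simp
    rw [this, map_mul, hy, one_mul]
  have hfin : ((fun u : Kˣ => σ u) '' {u : Kˣ | ‖(u : K)‖ = 1}).Finite := by
    let _ : TopologicalSpace (X →ₗ[ℂ] X) := ⊥
    have _ : DiscreteTopology (X →ₗ[ℂ] X) := ⟨rfl⟩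
    exact (hp_H_compact.image hlc.continuous).finite_of_discrete
  let F : Finset (X →ₗ[ℂ] X) := hfin.toFinset
  have hF : ∀ a, a ∈ F ↔ ∃ u : Kˣ, ‖(u : K)‖ = 1 ∧ σ u = a := fun a => by simp [F]
  have hFne : (F.card : ℂ) ≠ 0 := by
    rw [Nat.cast_ne_zero, Finset.card_ne_zero]
    exact ⟨σ 1, (hF _).2 ⟨1, by simp, rfl⟩⟩
  let e : X →ₗ[ℂ] X := (F.card : ℂ)⁻¹ • ∑ a ∈ F, a
  have he : ∀ x, e x = (F.card : ℂ)⁻¹ • ∑ a ∈ F, a x := fun x => by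
    simp [e, LinearMap.sum_apply]
  have heH : ∀ (h : Kˣ), ‖(h : K)‖ = 1 → ∀ x, e (σ h x) = e x := by
    intro h hh x
    rw [he, he]
    congr 1
    refine Finset.sum_bij (fun a _ => a * σ h) ?_ ?_ ?_ ?_
    · intro a ha
      obtain ⟨u, hu, rfl⟩ := (hF a).1 ha
      exact (hF _).2 ⟨u * h, by simp [hu, hh], map_mul _ _ _⟩
    · intro a _ b _ hab
      have := congrArg (· * σ h⁻¹) hab
      simpa [mul_assoc, ← map_mul] using this
    · intro a ha
      obtain ⟨u, hu, rfl⟩ := (hF a).1 ha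
      refine ⟨σ (u * h⁻¹), (hF _).2 ⟨u * h⁻¹, by simp [hu, hh], rfl⟩, ?_⟩
      rw [← map_mul]; simp
    · intro a _; rfl
  have hecomm : ∀ (u : Kˣ) x, e (σ u x) = σ u (e x) := by
    intro u x
    rw [he, he, map_smul, map_sum]
    congr 1
    refine Finset.sum_congr rfl fun a ha => ?_
    obtain ⟨w, hw, rfl⟩ := (hF a).1 ha
    exact hp_comm σ w u x
  have hefix : ∀ x, (∀ h : Kˣ, ‖(h : K)‖ = 1 → σ h x = x) → e x = x := by
    intro x hx
    have : ∑ a ∈ F, a x = ∑ a ∈ F, x := by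
      refine Finset.sum_congr rfl fun a ha => ?_
      obtain ⟨w, hw, rfl⟩ := (hF a).1 ha
      exact hx w hw
    rw [he, this, Finset.sum_const, ← Nat.cast_smul_eq_nsmul ℂ, smul_smul, inv_mul_cancel₀ hFne,
      one_smul]
  have heHx : ∀ (h : Kˣ), ‖(h : K)‖ = 1 → ∀ x, σ h (e x) = e x := by
    intro h hh x
    rw [← hecomm, heH h hh]
  have hee : ∀ x, e (e x) = e x := fun x => hefix _ fun h hh => heHx h hh x
  have heinv : ∀ C : Submodule ℂ X, GRep.Invariant σ C → ∀ x ∈ C, e x ∈ C := by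
    intro C hC x hx
    rw [he]
    refine C.smul_mem _ (C.sum_mem fun a ha => ?_)
    obtain ⟨w, hw, rfl⟩ := (hF a).1 ha
    exact hC w x hx
  obtain ⟨ϖ, hϖ⟩ := hp_unif (K := K)
  have hdec : ∀ u : Kˣ, ∃ (h : Kˣ) (k : ℤ), ‖(h : K)‖ = 1 ∧ u = h * ϖ ^ k := by
    intro u
    obtain ⟨k, hk⟩ := hϖ u
    exact ⟨u * ϖ ^ k, -k, hk, by simp⟩
  have hti1 : ∀ x, σ ϖ⁻¹ (σ ϖ x) = x := fun x => by
    rw [← Module.End.mul_apply, ← map_mul]; simp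
  have hti2 : ∀ x, σ ϖ (σ ϖ⁻¹ x) = x := fun x => by
    rw [← Module.End.mul_apply, ← map_mul]; simp
  have hpowinv : ∀ E : Submodule ℂ X, (∀ x ∈ E, σ ϖ x ∈ E) → (∀ x ∈ E, σ ϖ⁻¹ x ∈ E) →
      ∀ (k : ℤ), ∀ x ∈ E, σ (ϖ ^ k) x ∈ E := by
    intro E hE1 hE2 k
    induction k using Int.induction_on with
    | zero => intro x hx; simpa
    | succ k ih =>
      intro x hx
      rw [zpow_add_one, map_mul, Module.End.mul_apply]; exact ih _ (hE1 x hx)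
    | pred k ih =>
      intro x hx
      rw [zpow_sub_one, map_mul, Module.End.mul_apply]; exact ih _ (hE2 x hx)
  -- the isotypic part
  let Y : Submodule ℂ X := LinearMap.range e
  have hYe : ∀ y ∈ Y, e y = y := by rintro _ ⟨x, rfl⟩; exact hee x
  have hYinv : GRep.Invariant σ Y := by
    rintro g _ ⟨x, rfl⟩
    exact ⟨σ g x, hecomm g x⟩
  have hYfix : ∀ y ∈ Y, ∀ h : Kˣ, ‖(h : K)‖ = 1 → σ h y = y := by
    rintro _ ⟨x, rfl⟩ h hh; exact heHx h hh x
  have hYfg : ∀ i ≤ n, (W i ⊓ Y).FG := by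
    intro i
    induction i with
    | zero => intro _; rw [hbot, bot_inf_eq]; exact Submodule.fg_bot
    | succ i ih =>
      intro hi
      have hi' : i < n := hi
      refine hp_step (σ ϖ) (σ ϖ⁻¹) hti1 hti2 (W i ⊓ Y) (W (i + 1) ⊓ Y)
        (fun x hx => ⟨hinv _ _ _ hx.1, hYinv _ _ hx.2⟩)
        (fun x hx => ⟨hinv _ _ _ hx.1, hYinv _ _ hx.2⟩)
        (fun x hx => ⟨hinv _ _ _ hx.1, hYinv _ _ hx.2⟩)
        (fun x hx => ⟨hinv _ _ _ hx.1, hYinv _ _ hx.2⟩)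
        (inf_le_inf_right _ (hle i hi')) ?_ (ih hi'.le)
      intro E hE1 hE2 hCE hED
      have hEinv : GRep.Invariant σ E := by
        intro g x hx
        obtain ⟨h, k, hh, rfl⟩ := hdec g
        rw [map_mul, Module.End.mul_apply]
        have hm := hpowinv E hE1 hE2 k x hx
        rw [hYfix _ (hED hm).2 h hh]
        exact hm
      have hC' : GRep.Invariant σ (W i ⊔ E) := by
        intro g x hx
        obtain ⟨a, ha, b, hb, rfl⟩ := Submodule.mem_sup.1 hx
        rw [map_add]
        exact Submodule.add_mem_sup (hinv i g a ha) (hEinv g b hb)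
      have hkey : (W i ⊔ E) ⊓ Y ≤ E := by
        rintro x ⟨hx, hxY⟩
        obtain ⟨a, ha, b, hb, rfl⟩ := Submodule.mem_sup.1 hx
        rw [← hYe _ hxY, map_add]
        refine E.add_mem (hCE ⟨heinv _ (hinv i) a ha, ⟨a, rfl⟩⟩) (heinv _ hEinv b hb)
      rcases hmax i hi' (W i ⊔ E) hC' le_sup_left
        (sup_le (hle i hi') (hED.trans inf_le_left)) with h | h
      · left
        refine le_antisymm (fun x hx => ⟨?_, (hED hx).2⟩) hCE
        rw [← h]; exact (le_sup_right : E ≤ W i ⊔ E) hx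
      · right
        refine le_antisymm hED ?_
        rw [← h]; exact hkey
  have hYfin : Module.Finite ℂ Y := by
    rw [Module.Finite.iff_fg]
    have := hYfg n le_rfl
    rwa [htop, top_inf_eq] at this
  let φ : Y →ₗ[ℂ] Y := (σ ϖ - 1 : X →ₗ[ℂ] X).restrict (p := Y) (q := Y)
    (fun y hy => Y.sub_mem (hYinv _ _ hy) hy)
  have hφ : ∀ y : Y, (φ y : X) = σ ϖ y - y := fun y => rfl
  have hx₁Y : x₁ ∈ Y := ⟨x₁, hefix _ fun h _ => hx₁ h⟩
  have hx₂Y : x₂ ∈ Y := ⟨x₂, hefix _ fun h _ => hx₂ h⟩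
  have hker : 2 ≤ Module.finrank ℂ (LinearMap.ker φ) := by
    let y : Fin 2 → LinearMap.ker φ :=
      ![⟨⟨x₁, hx₁Y⟩, by rw [LinearMap.mem_ker]; apply Subtype.ext; rw [hφ]; simp [hx₁]⟩,
        ⟨⟨x₂, hx₂Y⟩, by rw [LinearMap.mem_ker]; apply Subtype.ext; rw [hφ]; simp [hx₂]⟩]
    have hy : LinearIndependent ℂ y := by
      apply LinearIndependent.of_comp (Y.subtype ∘ₗ (LinearMap.ker φ).subtype)
      convert hli using 1
      ext i
      fin_cases i <;> rfl
    simpa using hy.fintype_card_le_finrank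
  let g : Y →ₗ[ℂ] (X ⧸ N) := N.mkQ ∘ₗ Y.subtype
  have hg : Function.Surjective g := by
    intro q
    obtain ⟨x, rfl⟩ := N.mkQ_surjective q
    refine ⟨⟨e x, x, rfl⟩, ?_⟩
    show N.mkQ (e x) = N.mkQ x
    rw [← sub_eq_zero, ← map_sub, Submodule.mkQ_apply, Submodule.Quotient.mk_eq_zero]
    have hs : e x - x = (F.card : ℂ)⁻¹ • ∑ a ∈ F, (a x - x) := by
      rw [Finset.sum_sub_distrib, smul_sub, ← he, Finset.sum_const, ← Nat.cast_smul_eq_nsmul ℂ,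
        smul_smul, inv_mul_cancel₀ hFne, one_smul]
    rw [hs]
    refine N.smul_mem _ (N.sum_mem fun a ha => ?_)
    obtain ⟨w, hw, rfl⟩ := (hF a).1 ha
    rw [hN]
    exact Submodule.subset_span ⟨w, x, rfl⟩
  have hpow : ∀ (k : ℤ) (y : Y), ∃ z : Y, σ (ϖ ^ k) (y : X) - y = φ z := by
    intro k
    induction k using Int.induction_on with
    | zero => intro y; exact ⟨0, by simp⟩
    | succ k ih =>
      intro y
      obtain ⟨z, hz⟩ := ih ⟨σ ϖ y, hYinv _ _ y.2⟩
      refine ⟨z + y, ?_⟩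
      rw [map_add, Submodule.coe_add, ← hz, hφ, zpow_add_one, map_mul, Module.End.mul_apply]
      simp
    | pred k ih =>
      intro y
      obtain ⟨z, hz⟩ := ih ⟨σ ϖ⁻¹ y, hYinv _ _ y.2⟩
      refine ⟨z - ⟨σ ϖ⁻¹ y, hYinv _ _ y.2⟩, ?_⟩
      rw [map_sub, Submodule.coe_sub, ← hz, hφ, zpow_sub_one, map_mul, Module.End.mul_apply]
      simp only [hti2]
      abel
  have hNe : N ≤ ((LinearMap.range φ).map Y.subtype).comap e := by
    rw [hN, Submodule.span_le]
    rintro _ ⟨u, x, rfl⟩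
    obtain ⟨h, k, hh, rfl⟩ := hdec u
    obtain ⟨z, hz⟩ := hpow k ⟨e x, x, rfl⟩
    refine ⟨φ z, ⟨z, rfl⟩, ?_⟩
    rw [map_sub, map_mul, Module.End.mul_apply, heH h hh, hecomm]
    exact hz.symm
  have hkg : LinearMap.ker g ≤ LinearMap.range φ := by
    intro y hy
    have hyN : (y : X) ∈ N := by
      rw [LinearMap.mem_ker] at hy
      exact (Submodule.Quotient.mk_eq_zero N).1 hy
    obtain ⟨z, hz, hzy⟩ := hNe hyN
    rw [hYe _ y.2] at hzy
    have : z = y := Subtype.ext hzy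
    rwa [← this]
  have e1 := LinearMap.finrank_range_add_finrank_ker g
  have e2 := LinearMap.finrank_range_add_finrank_ker φ
  have e3 := Submodule.finrank_mono hkg
  rw [LinearMap.range_eq_top.2 hg, finrank_top] at e1
  omega

end TMod

section SMod

variable {K : Type*} [NontriviallyNormedField K] [IsUltrametricDist K] [ProperSpace K]

lemma hp_psi_ne (ψ : AddChar K ℂ) (hψne : ψ ≠ 1) (x : K) (hx : x ≠ 0) : ∃ b : K, ψ (b * x) ≠ 1 := by
  obtain ⟨y, hy⟩ := AddChar.ne_one_iff.1 hψne
  exact ⟨y * x⁻¹, by rwa [inv_mul_cancel_right₀ hx]⟩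

lemma hp_coinv_aux (ψ : AddChar K ℂ) (hψlc : IsLocallyConstant (⇑ψ)) (χ : Kˣ →* ℂˣ)
    (F : Finset K) : ∀ h : ↥(CcK K), (∀ x, (h : K → ℂ) x ≠ 0 → ∃ b ∈ F, ψ (b * x) ≠ 1) →
      h ∈ sCoinvKer (ERep ψ hψlc χ) := by
  induction F using Finset.induction_on with
  | empty =>
    intro h hh
    have : h = 0 := by
      apply Subtype.ext; funext x
      by_contra hx
      obtain ⟨b, hb, _⟩ := hh x hx
      simp at hb
    rw [this]; exact Submodule.zero_mem _
  | insert b F _ ih =>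
    intro h hh
    have hm : IsLocallyConstant (fun x : K => ψ (b * x)) :=
      hψlc.comp_continuous (continuous_const.mul continuous_id)
    let k : ↥(CcK K) := ⟨fun x => (h : K → ℂ) x * (ψ (b * x) - 1)⁻¹, by
      refine ⟨h.2.1.comp₂ hm (fun z w => z * (w - 1)⁻¹), ?_⟩
      exact h.2.2.mul_right⟩
    have hk : ∀ x, ((ERep ψ hψlc χ (sS b) k - k : ↥(CcK K)) : K → ℂ) x
        = (ψ (b * x) - 1) * ((h : K → ℂ) x * (ψ (b * x) - 1)⁻¹) := by
      intro x
      show (χ 1 : ℂ) * ψ (b * x) * ((h : K → ℂ) (x * ((1 : Kˣ) : K)) *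
        (ψ (b * (x * ((1 : Kˣ) : K))) - 1)⁻¹) - ((h : K → ℂ) x * (ψ (b * x) - 1)⁻¹) = _
      simp only [map_one, Units.val_one, mul_one]
      ring
    have h1 : ERep ψ hψlc χ (sS b) k - k ∈ sCoinvKer (ERep ψ hψlc χ) :=
      Submodule.subset_span ⟨b, k, rfl⟩
    have h2 : h - (ERep ψ hψlc χ (sS b) k - k) ∈ sCoinvKer (ERep ψ hψlc χ) := by
      apply ih
      intro x hx
      have hx' : (h : K → ℂ) x - ((ERep ψ hψlc χ (sS b) k - k : ↥(CcK K)) : K → ℂ) x ≠ 0 := hx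
      rw [hk] at hx'
      have hb : ψ (b * x) = 1 := by
        by_contra hb
        apply hx'
        have : ψ (b * x) - 1 ≠ 0 := sub_ne_zero.2 hb
        field_simp
        ring
      have hhx : (h : K → ℂ) x ≠ 0 := by
        rw [hb] at hx'; simpa using hx'
      obtain ⟨c, hc, hc1⟩ := hh x hhx
      rcases Finset.mem_insert.1 hc with rfl | hc
      · exact absurd hb hc1
      · exact ⟨c, hc, hc1⟩
    have := Submodule.add_mem _ h2 h1
    rwa [sub_add_cancel] at this

lemma hp_coinv (ψ : AddChar K ℂ) (hψlc : IsLocallyConstant (⇑ψ)) (hψne : ψ ≠ 1) (χ : Kˣ →* ℂˣ)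
    (h : ↥(CcK K)) (h0 : (h : K → ℂ) 0 = 0) : h ∈ sCoinvKer (ERep ψ hψlc χ) := by
  have hcl : IsClosed (Function.support (h : K → ℂ)) := by
    have : Function.support (h : K → ℂ) = (h : K → ℂ) ⁻¹' {0}ᶜ := rfl
    rw [this, ← isOpen_compl_iff, ← Set.preimage_compl]
    exact h.2.1 _
  have hcomp : IsCompact (Function.support (h : K → ℂ)) := by
    have := h.2.2.isCompact
    rwa [tsupport, hcl.closure_eq] at this
  obtain ⟨F, hF⟩ := hcomp.elim_finite_subcover (fun b : K => {x : K | ψ (b * x) ≠ 1})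
    (fun b => (hψlc.comp_continuous (continuous_const.mul continuous_id)) {1}ᶜ) (by
      intro x hx
      have hx0 : x ≠ 0 := by rintro rfl; exact hx h0
      obtain ⟨b, hb⟩ := hp_psi_ne ψ hψne x hx0
      exact Set.mem_iUnion.2 ⟨b, hb⟩)
  refine hp_coinv_aux ψ hψlc χ F h fun x hx => ?_
  obtain ⟨b, hb⟩ := Set.mem_iUnion.1 (hF hx)
  obtain ⟨hbF, hb⟩ := Set.mem_iUnion.1 hb
  exact ⟨b, hbF, hb⟩

lemma hp_sS_add (b c : K) : (sS b * sS c : Aff K) = sS (b + c) := by ext <;> simp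

lemma hp_continuous_sS : Continuous (fun b : K => (sS b : Aff K)) := by
  rw [continuous_induced_rng]
  exact continuous_const.prodMk continuous_id

lemma hp_continuous_xT : Continuous (fun u : Kˣ => (xT u : Aff K)) := by
  rw [continuous_induced_rng]
  exact continuous_id.prodMk continuous_const

variable {V : Type*} [AddCommGroup V] [Module ℂ V]

/-- Averaging operators. -/
def hpGood (ψ : AddChar K ℂ) (ρ : Rep K V) (f : ↥(CcK K) →ₗ[ℂ] V) (P : Module.End ℂ V) : Prop :=
  (∀ v ∈ sInv ρ, P v = v) ∧
  (∀ g : ↥(CcK K), ∃ g' : ↥(CcK K), P (f g) = f g' ∧ (g' : K → ℂ) 0 = (g : K → ℂ) 0) ∧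
  (∀ Q : Module.End ℂ V, (∀ b, Commute Q (ρ (sS b))) → Commute P Q)

lemma hp_good_kill (ψ : AddChar K ℂ) (hψlc : IsLocallyConstant (⇑ψ)) (χ : Kˣ →* ℂˣ)
    (ρ : Rep K V) (hρ : IsSmoothRep ρ) (f : ↥(CcK K) →ₗ[ℂ] V)
    (hf : GRep.Equivariant (ERep ψ hψlc χ) ρ f) (w : V) (hw : w ∈ sCoinvKer ρ) :
    ∃ P, hpGood ψ ρ f P ∧ P w = 0 := by
  have hSS : ∀ b c, Commute (ρ (sS b)) (ρ (sS c)) := fun b c => by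
    show _ * _ = _ * _
    rw [← map_mul, ← map_mul, hp_sS_add, hp_sS_add, add_comm]
  induction hw using Submodule.span_induction with
  | zero =>
    exact ⟨1, ⟨fun _ _ => rfl, fun g => ⟨g, rfl, rfl⟩, fun Q _ => Commute.one_left Q⟩, by simp⟩
  | add x y _ _ hx hy =>
    obtain ⟨P, hP, hPx⟩ := hx
    obtain ⟨Q, hQ, hQy⟩ := hy
    refine ⟨P * Q, ⟨fun v hv => ?_, fun g => ?_, fun R hR => ?_⟩, ?_⟩
    · rw [Module.End.mul_apply, hQ.1 v hv, hP.1 v hv]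
    · obtain ⟨g', h1, h2⟩ := hQ.2.1 g
      obtain ⟨g'', h3, h4⟩ := hP.2.1 g'
      exact ⟨g'', by rw [Module.End.mul_apply, h1, h3], h4.trans h2⟩
    · exact (hP.2.2 R hR).mul_left (hQ.2.2 R hR)
    · have hc : Commute P Q := hP.2.2 Q fun b => hQ.2.2 _ fun c => hSS b c
      rw [map_add]
      nth_rewrite 1 [hc.eq]
      rw [Module.End.mul_apply, Module.End.mul_apply, hPx, hQy, map_zero, map_zero, add_zero]
  | smul a x _ hx =>
    obtain ⟨P, hP, hPx⟩ := hx
    exact ⟨P, hP, by rw [map_smul, hPx, smul_zero]⟩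
  | mem x hx =>
    obtain ⟨b, v, rfl⟩ := hx
    have hO : {c : K | ρ (sS c) v = v} ∈ 𝓝 (0 : K) := by
      refine ((hρ v).preimage hp_continuous_sS).mem_nhds ?_
      show ρ (sS 0) v = v
      have : (sS 0 : Aff K) = 1 := rfl
      rw [this]; simp
    obtain ⟨n, hn, hnb⟩ := hp_mult b _ hO
    have hn0 : (n : ℂ) ≠ 0 := Nat.cast_ne_zero.2 hn.ne'
    refine ⟨(n : ℂ)⁻¹ • ∑ j ∈ Finset.range n, ρ (sS ((j : K) * b)),
      ⟨fun v hv => ?_, fun g => ?_, fun R hR => ?_⟩, ?_⟩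
    · rw [LinearMap.smul_apply, LinearMap.sum_apply, Finset.sum_congr rfl fun j _ => hv _,
        Finset.sum_const, Finset.card_range, ← Nat.cast_smul_eq_nsmul ℂ, smul_smul,
        inv_mul_cancel₀ hn0, one_smul]
    · refine ⟨(n : ℂ)⁻¹ • ∑ j ∈ Finset.range n, ERep ψ hψlc χ (sS ((j : K) * b)) g, ?_, ?_⟩
      · rw [LinearMap.smul_apply, LinearMap.sum_apply, map_smul, map_sum]
        simp only [hf _ g]
      · have hz : ∀ j : ℕ, ((ERep ψ hψlc χ (sS ((j : K) * b)) g : ↥(CcK K)) : K → ℂ) 0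
            = (g : K → ℂ) 0 := by
          intro j
          show (χ 1 : ℂ) * ψ ((j : K) * b * 0) * (g : K → ℂ) (0 * ((1 : Kˣ) : K)) = _
          simp
        rw [Submodule.coe_smul, Pi.smul_apply, AddSubmonoidClass.coe_finsetSum, Finset.sum_apply,
          Finset.sum_congr rfl fun j _ => hz j,
          Finset.sum_const, Finset.card_range, ← Nat.cast_smul_eq_nsmul ℂ, smul_smul,
          inv_mul_cancel₀ hn0, one_smul]
    · exact (Commute.sum_left _ _ _ fun j _ => (hR _).symm).smul_left _
    · rw [LinearMap.smul_apply, LinearMap.sum_apply]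
      have : ∀ j : ℕ, ρ (sS ((j : K) * b)) (ρ (sS b) v - v)
          = ρ (sS (((j + 1 : ℕ) : K) * b)) v - ρ (sS ((j : K) * b)) v := by
        intro j
        rw [map_sub, ← Module.End.mul_apply, ← map_mul, hp_sS_add]
        congr 4
        push_cast; ring
      rw [Finset.sum_congr rfl fun j _ => this j,
        Finset.sum_range_sub (fun j : ℕ => ρ (sS ((j : K) * b)) v)]
      have h0 : (sS (((0 : ℕ) : K) * b) : Aff K) = 1 := by ext <;> simp
      rw [h0, map_one, show ρ (sS ((n : K) * b)) v = v from hnb]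
      simp

lemma hp_indep (ψ : AddChar K ℂ) (hψlc : IsLocallyConstant (⇑ψ)) (hψne : ψ ≠ 1) (χ : Kˣ →* ℂˣ)
    (ρ : Rep K V) (hρ : IsSmoothRep ρ) (f : ↥(CcK K) →ₗ[ℂ] V) (hinj : Function.Injective f)
    (hf : GRep.Equivariant (ERep ψ hψlc χ) ρ f) (v : V) (hv : v ∈ sInv ρ) (hv0 : v ≠ 0)
    (g : ↥(CcK K)) (hg : (g : K → ℂ) 0 ≠ 0) (a b : ℂ) (h : a • v + b • f g ∈ sCoinvKer ρ) :
    a = 0 ∧ b = 0 := by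
  obtain ⟨P, hP, hPw⟩ := hp_good_kill ψ hψlc χ ρ hρ f hf _ h
  obtain ⟨g', hg', hg0⟩ := hP.2.1 g
  rw [map_add, map_smul, map_smul, hP.1 v hv, hg'] at hPw
  have hb : b = 0 := by
    by_contra hb
    have hx : ∀ x : K, x ≠ 0 → (g' : K → ℂ) x = 0 := by
      intro x hx0
      obtain ⟨c, hc⟩ := hp_psi_ne ψ hψne x hx0
      have h1 := congrArg (ρ (sS c)) hPw
      rw [map_add, map_smul, map_smul, hv c, map_zero, ← hPw, add_right_inj, ← hf] at h1
      have h2 := hinj (smul_right_injective V hb h1)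
      have h3 : (χ 1 : ℂ) * ψ (c * x) * (g' : K → ℂ) (x * ((1 : Kˣ) : K)) = (g' : K → ℂ) x :=
        congrFun (congrArg Subtype.val h2) x
      simp only [map_one, Units.val_one, mul_one, one_mul] at h3
      have h4 : (ψ (c * x) - 1) * (g' : K → ℂ) x = 0 := by rw [sub_mul, h3]; ring
      exact (mul_eq_zero.1 h4).resolve_left (sub_ne_zero.2 hc)
    have h5 := (IsLocallyConstant.iff_eventually_eq _).1 g'.2.1 0
    have h6 : ∀ᶠ x : K in 𝓝[≠] 0, (g' : K → ℂ) x = (g' : K → ℂ) 0 := h5.filter_mono nhdsWithin_le_nhds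
    obtain ⟨x, hx1, hx2⟩ := (h6.and self_mem_nhdsWithin).exists
    apply hg
    rw [← hg0, ← hx1, hx x hx2]
  refine ⟨?_, hb⟩
  rw [hb, zero_smul, add_zero] at hPw
  exact (smul_eq_zero.1 hPw).resolve_right hv0

end SMod

section Fin5

variable {K : Type*} [NontriviallyNormedField K] [IsUltrametricDist K] [ProperSpace K]

/-- Twist of a representation by the inverse of a character. -/
def hpTw {X : Type*} [AddCommGroup X] [Module ℂ X] (τ : Representation ℂ Kˣ X)
    (χ : Kˣ →* ℂˣ) : Representation ℂ Kˣ X where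
  toFun u := (((χ u)⁻¹ : ℂˣ) : ℂ) • τ u
  map_one' := by simp
  map_mul' u w := by
    apply LinearMap.ext; intro x
    simp only [map_mul, mul_inv, Units.val_mul, LinearMap.smul_apply, Module.End.mul_apply,
      map_smul, smul_smul]
    rw [mul_comm]

lemma hpTw_apply {X : Type*} [AddCommGroup X] [Module ℂ X] (τ : Representation ℂ Kˣ X)
    (χ : Kˣ →* ℂˣ) (u : Kˣ) (x : X) : hpTw τ χ u x = (((χ u)⁻¹ : ℂˣ) : ℂ) • τ u x := rfl

lemma hpTw_smul {X : Type*} [AddCommGroup X] [Module ℂ X] (τ : Representation ℂ Kˣ X)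
    (χ : Kˣ →* ℂˣ) (u : Kˣ) (x : X) : (χ u : ℂ) • hpTw τ χ u x = τ u x := by
  rw [hpTw_apply, smul_smul, Units.mul_inv, one_smul]

lemma hp_bump : ∃ g : ↥(CcK K), (g : K → ℂ) 0 ≠ 0 := by
  refine ⟨⟨Set.indicator (Metric.closedBall (0 : K) 1) (fun _ => (1 : ℂ)), ?_, ?_⟩, ?_⟩
  · have hU : IsClopen (Metric.closedBall (0 : K) 1) :=
      IsUltrametricDist.isClopen_closedBall (0 : K) one_ne_zero
    have h : IsLocallyConstant (⇑(LocallyConstant.charFn ℂ hU)) :=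
      (LocallyConstant.charFn ℂ hU).isLocallyConstant
    rw [LocallyConstant.coe_charFn] at h
    exact h
  · refine HasCompactSupport.intro (isCompact_closedBall (0 : K) 1) ?_
    intro x hx
    exact Set.indicator_of_notMem hx _
  · simp

lemma hp_piZeroT_mk {V : Type*} [AddCommGroup V] [Module ℂ V] (ρ : Rep K V) (u : Kˣ) (v : V) :
    piZeroT ρ u ((sCoinvKer ρ).mkQ v) = (sCoinvKer ρ).mkQ (ρ (xT u) v) := rfl

lemma hp_mk_rho {V : Type*} [AddCommGroup V] [Module ℂ V] (ρ : Rep K V) (g : Aff K) (v : V) :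
    (sCoinvKer ρ).mkQ (ρ g v) = piZeroT ρ g.t ((sCoinvKer ρ).mkQ v) := by
  rw [hp_piZeroT_mk]
  conv_lhs => rw [aff_decomp g]
  rw [map_mul, Module.End.mul_apply, ← hp_piZeroT_mk, ← hp_piZeroT_mk]
  congr 1
  rw [← sub_eq_zero, ← map_sub]
  rw [Submodule.mkQ_apply, Submodule.Quotient.mk_eq_zero]
  exact Submodule.subset_span ⟨_, _, rfl⟩

lemma hp_final
    (ψ : AddChar K ℂ) (hψlc : IsLocallyConstant (⇑ψ)) (hψne : ψ ≠ 1)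
    {V : Type*} [AddCommGroup V] [Module ℂ V]
    (ρ : Rep K V) (hρ : IsSmoothRep ρ) (c : CompSeries ρ)
    (χ : Kˣ →* ℂˣ) (hχ : SmoothMulChar χ)
    (h1 : Module.finrank ℂ
      ((V ⧸ sCoinvKer ρ) ⧸ tTwistKerT (piZeroT ρ) χ) ≤ 1)
    (h2 : sInv ρ ⊓ tEigen ρ χ ≠ ⊥) :
    ¬ ∃ f : ↥(CcK K) →ₗ[ℂ] V, Function.Injective f ∧
        GRep.Equivariant (ERep ψ hψlc χ) ρ f := by
  rintro ⟨f, hinj, hf⟩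
  obtain ⟨v, ⟨hvS, hvT⟩, hv0⟩ := Submodule.exists_mem_ne_zero_of_ne_bot h2
  have hvT' : ∀ u : Kˣ, ρ (xT u) v = (χ u : ℂ) • v := hvT
  obtain ⟨g₀, hg₀⟩ := hp_bump (K := K)
  have hinvC : ∀ C : Submodule ℂ (V ⧸ sCoinvKer ρ), GRep.Invariant (hpTw (piZeroT ρ) χ) C →
      ∀ u x, x ∈ C → piZeroT ρ u x ∈ C := by
    intro C hC u x hx
    rw [← hpTw_smul (piZeroT ρ) χ]
    exact C.smul_mem _ (hC u x hx)
  have key := hp_Tlemma (hpTw (piZeroT ρ) χ) ?_ c.n (fun i => (c.W i).map (sCoinvKer ρ).mkQ)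
    ?_ ?_ ?_ ?_ ?_ ((sCoinvKer ρ).mkQ v) ((sCoinvKer ρ).mkQ (f g₀)) ?_ ?_ ?_
    (tTwistKerT (piZeroT ρ) χ) ?_
  · omega
  · intro x
    obtain ⟨w, rfl⟩ := (sCoinvKer ρ).mkQ_surjective x
    have ha : {u : Kˣ | ρ (xT u) w = w} ∈ 𝓝 (1 : Kˣ) := by
      have ho : IsOpen {u : Kˣ | ρ (xT u) w = w} := (hρ w).preimage hp_continuous_xT
      refine ho.mem_nhds ?_
      show ρ (xT 1) w = w
      rw [show (xT 1 : Aff K) = 1 from rfl, map_one]; rfl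
    have hb : {u : Kˣ | χ u = 1} ∈ 𝓝 (1 : Kˣ) :=
      IsOpen.mem_nhds hχ (map_one χ)
    filter_upwards [ha, hb] with u hu hu'
    have hu1 : ρ (xT u) w = w := hu
    have hu2 : χ u = 1 := hu'
    show hpTw (piZeroT ρ) χ u _ = _
    rw [hpTw_apply, hp_piZeroT_mk, hu1, hu2]; simp
  · simp [c.bot]
  · simp [c.top]
  · rintro i u _ ⟨w, hw, rfl⟩
    rw [hpTw_apply, hp_piZeroT_mk]
    exact Submodule.smul_mem _ _ ⟨_, c.inv i _ _ hw, rfl⟩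
  · intro i hi
    exact Submodule.map_mono (c.lt i hi).le
  · intro i hi C hC hl hr
    have hm := c.maximal i hi (C.comap (sCoinvKer ρ).mkQ ⊓ c.W (i + 1)) ?_ ?_ inf_le_right
    · have hCe : (C.comap (sCoinvKer ρ).mkQ ⊓ c.W (i + 1)).map (sCoinvKer ρ).mkQ = C := by
        apply le_antisymm
        · rintro _ ⟨w, hw, rfl⟩
          exact hw.1
        · intro x hx
          obtain ⟨w, hw, rfl⟩ := hr hx
          exact ⟨w, ⟨hx, hw⟩, rfl⟩
      rcases hm with hm | hm
      · left; rw [← hCe, hm]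
      · right; rw [← hCe, hm]
    · rintro g w ⟨hw, hw'⟩
      refine ⟨?_, c.inv _ _ _ hw'⟩
      show (sCoinvKer ρ).mkQ (ρ g w) ∈ C
      rw [hp_mk_rho]
      exact hinvC C hC _ _ hw
    · exact le_inf (fun w hw => hl ⟨w, hw, rfl⟩) (c.lt i hi).le
  · intro u
    rw [hpTw_apply, hp_piZeroT_mk, hvT', map_smul, smul_smul, Units.inv_mul, one_smul]
  · intro u
    have hz : ERep ψ hψlc χ (xT u) g₀ - (χ u : ℂ) • g₀ ∈ sCoinvKer (ERep ψ hψlc χ) := by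
      apply hp_coinv ψ hψlc hψne χ
      show (χ u : ℂ) * ψ (0 * 0) * (g₀ : K → ℂ) (0 * (u : K)) - (χ u : ℂ) * (g₀ : K → ℂ) 0 = 0
      simp
    have hz' := sCoinvKer_le_comap (ERep ψ hψlc χ) ρ f hf hz
    rw [Submodule.mem_comap, map_sub, map_smul, hf] at hz'
    have hz2 : (sCoinvKer ρ).mkQ (ρ (xT u) (f g₀) - (χ u : ℂ) • f g₀) = 0 := by
      rw [Submodule.mkQ_apply, Submodule.Quotient.mk_eq_zero]; exact hz'
    rw [map_sub, map_smul, sub_eq_zero] at hz2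
    rw [hpTw_apply, hp_piZeroT_mk, hz2, smul_smul, Units.inv_mul, one_smul]
  · rw [LinearIndependent.pair_iff]
    intro a b hab
    rw [← map_smul, ← map_smul, ← map_add, Submodule.mkQ_apply,
      Submodule.Quotient.mk_eq_zero] at hab
    exact hp_indep ψ hψlc hψne χ ρ hρ f hinj hf v hvS hv0 g₀ hg₀ a b hab
  · apply le_antisymm
    · refine Submodule.span_le.2 ?_
      rintro _ ⟨u, x, rfl⟩
      rw [← hpTw_smul (piZeroT ρ) χ, ← smul_sub]
      exact Submodule.smul_mem _ _ (Submodule.subset_span ⟨u, x, rfl⟩)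
    · refine Submodule.span_le.2 ?_
      rintro _ ⟨u, x, rfl⟩
      have : hpTw (piZeroT ρ) χ u x - x
          = (((χ u)⁻¹ : ℂˣ) : ℂ) • (piZeroT ρ u x - (χ u : ℂ) • x) := by
        rw [smul_sub, smul_smul, Units.inv_mul, one_smul, hpTw_apply]
      rw [this]
      exact Submodule.smul_mem _ _ (Submodule.subset_span ⟨u, x, rfl⟩)

end Fin5

end Helpers

section Statements

open Aff

variable {K : Type*} [NontriviallyNormedField K] [IsUltrametricDist K] [ProperSpace K]

theorem statement14
    (hchar : (2 : K) ≠ 0)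
    (ψ : AddChar K ℂ) (hψlc : IsLocallyConstant (⇑ψ)) (hψne : ψ ≠ 1)
    {V : Type*} [AddCommGroup V] [Module ℂ V]
    (ρ : Rep K V) (hρ : IsSmoothRep ρ) (c : CompSeries ρ)
    (hdeg : c.deg (SRep ψ hψlc) = 1)
    (χ : Kˣ →* ℂˣ) (hχ : SmoothMulChar χ)
    (h1 : Module.finrank ℂ
      ((V ⧸ sCoinvKer ρ) ⧸ tTwistKerT (piZeroT ρ) χ) ≤ 1)
    (h2 : sInv ρ ⊓ tEigen ρ χ ≠ ⊥) :
    ¬ ∃ f : ↥(CcK K) →ₗ[ℂ] V, Function.Injective f ∧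
        GRep.Equivariant (ERep ψ hψlc χ) ρ f := by
  exact hp_final ψ hψlc hψne ρ hρ c χ hχ h1 h2

end Statements

end PSW
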